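/- Let k and s be natural numbers. Every graph containing a (k+2)-rake as a (not necessarily induced) subgraph contains either an (s+5)-dense k-rake as a subgraph, or a canonical graph of order at least s as an induced subgraph. -/

import Mathlib

/-!
Take a `(k + 2)`-rake of `G` whose base is as short as possible. Drop its first and last roots and
trim the base to the remaining `k` roots. If the resulting `k`-rake is not `(s + 5)`-dense, there are
two consecutive roots `r`, `r'` separated by at least `s + 5` non-roots, each with a base neighbour
outside the gap.

Minimality makes the neighbourhood of this gap almost induced. The base path from `r` to `r'` is
chordless (`IsMinRake.not_adj_of_shortcut`). The outer base neighbour of `r` sees no vertex strictly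
inside the gap, since otherwise the base could be shortened and the root `r` replaced by the far end
of the shortcut, with the predecessor of that end as tooth (`IsMinRake.not_adj_of_root_shift`). The
tooth of `r` sees no vertex at distance three or more from `r` along the gap, since otherwise the base
could be rerouted through the tooth, and the successor of `r` would serve as new tooth
(`IsMinRake.not_adj_tooth`). The same holds at `r'` by reversal.

If the outer neighbour of one root sees the other root, the gap closes to a hole. Otherwise, shifting
the start by at most two vertices, the last neighbour of the tooth inside the gap has two private
wings, the tooth and the preceding base vertex (`IsLeftEnd.exists_wings`); likewise on the right. A
chordless path with two wings at each end is an H-graph unless a left wing sees a right one, in which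
case it closes to a hole (`containsCanonical_of_wings`).
-/

open SimpleGraph

/-- `H` is contained in `G` as a (not necessarily induced) subgraph:
there is an injective graph homomorphism from `H` to `G`. -/
def ContainsSub {α β : Type*} (H : SimpleGraph α) (G : SimpleGraph β) : Prop :=
  ∃ f : H →g G, Function.Injective f

/-- `H` is contained in `G` as an induced subgraph: there is a graph embedding. -/
def ContainsInd {α β : Type*} (H : SimpleGraph α) (G : SimpleGraph β) : Prop :=
  Nonempty (H ↪g G)

/-- The H-graph with body `b_1 … b_m` (the vertices `Sum.inl i`) and four wings
(`Sum.inr w`): wings `0, 1` (left) are adjacent to `b_1`, wings `2, 3` (right) are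
adjacent to `b_m`; the two left wings are adjacent iff `lt`, and the two right
wings are adjacent iff `rt`. -/
def hGraph (m : ℕ) (lt rt : Prop) : SimpleGraph (Fin m ⊕ Fin 4) :=
  SimpleGraph.fromRel (fun x y =>
    match x, y with
    | Sum.inl i, Sum.inl j => (i : ℕ) + 1 = (j : ℕ)
    | Sum.inr w, Sum.inl i => ((w : ℕ) < 2 ∧ (i : ℕ) = 0) ∨ (2 ≤ (w : ℕ) ∧ (i : ℕ) + 1 = m)
    | Sum.inr w, Sum.inr w' =>
        (lt ∧ (w : ℕ) = 0 ∧ (w' : ℕ) = 1) ∨ (rt ∧ (w : ℕ) = 2 ∧ (w' : ℕ) = 3)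
    | _, _ => False)

/-- The three kinds of H-graphs with body of length `m`:
`t = 0` is the plain H-graph, `t = 1` the semi-tight one (the two right wings
adjacent), `t = 2` the tight one (both pairs of wings adjacent). -/
def hGraphT (m : ℕ) (t : Fin 3) : SimpleGraph (Fin m ⊕ Fin 4) :=
  hGraph m ((t : ℕ) = 2) ((t : ℕ) ≠ 0)

/-- `G` contains a canonical graph of order at least `s` as an induced subgraph:
either a hole `C_n` with `n ≥ 4`, `n ≥ s`, or an H-graph (plain, semi-tight or
tight) with body of length `m ≥ 1`, `m ≥ s`. -/
def ContainsCanonical {β : Type*} (G : SimpleGraph β) (s : ℕ) : Prop :=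
  (∃ n : ℕ, 4 ≤ n ∧ s ≤ n ∧ ContainsInd (cycleGraph n) G) ∨
  (∃ m : ℕ, 1 ≤ m ∧ s ≤ m ∧ ∃ t : Fin 3, ContainsInd (hGraphT m t) G)

/-- The rake with base the chordless path on `Fin n` and `k` teeth (`Sum.inr t`),
tooth `t` being adjacent exactly to its root `r t` on the base. -/
def rakeGraph (n k : ℕ) (r : Fin k → Fin n) : SimpleGraph (Fin n ⊕ Fin k) :=
  SimpleGraph.fromRel (fun x y =>
    match x, y with
    | Sum.inl i, Sum.inl j => (i : ℕ) + 1 = (j : ℕ)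
    | Sum.inr t, Sum.inl i => r t = i
    | _, _ => False)

/-- `G` contains a `k`-rake as a (not necessarily induced) subgraph. -/
def ContainsRake {β : Type*} (G : SimpleGraph β) (k : ℕ) : Prop :=
  ∃ (n : ℕ) (r : Fin k → Fin n), Function.Injective r ∧ ContainsSub (rakeGraph n k r) G

/-- `G` contains an `ℓ`-dense `k`-rake as a subgraph: every `ℓ` consecutive
vertices of the base include at least one root. -/
def ContainsDenseRake {β : Type*} (G : SimpleGraph β) (k ℓ : ℕ) : Prop :=
  ∃ (n : ℕ) (r : Fin k → Fin n), Function.Injective r ∧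
    (∀ i : ℕ, i + ℓ ≤ n → ∃ t : Fin k, i ≤ (r t : ℕ) ∧ (r t : ℕ) < i + ℓ) ∧
    ContainsSub (rakeGraph n k r) G

/-! ### Recognising canonical graphs -/

theorem containsInd_of_map {α β : Type*} {H : SimpleGraph α} {G : SimpleGraph β} (φ : α → β)
    (hinj : Function.Injective φ) (hadj : ∀ x y, G.Adj (φ x) (φ y) ↔ H.Adj x y) :
    ContainsInd H G :=
  ⟨⟨⟨φ, hinj⟩, fun {x y} => hadj x y⟩⟩

/-- A sequence `c 0, …, c (n - 1)` that is an induced cycle yields a hole of order `n`. -/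
theorem containsCanonical_of_cycle {β : Type*} {G : SimpleGraph β} {s n : ℕ} (c : ℕ → β)
    (hn : 4 ≤ n) (hs : s ≤ n) (hinj : ∀ i j, i < j → j < n → c i ≠ c j)
    (hadj : ∀ i j, i < j → j < n → (G.Adj (c i) (c j) ↔ j = i + 1 ∨ (i = 0 ∧ j + 1 = n))) :
    ContainsCanonical G s := by
  refine Or.inl ⟨n, hn, hs, containsInd_of_map (fun i => c i) ?_ ?_⟩
  · intro i j hij
    rcases lt_trichotomy (i : ℕ) j with h | h | h
    · exact absurd hij (hinj _ _ h j.2)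
    · exact Fin.ext h
    · exact absurd hij.symm (hinj _ _ h i.2)
  · have key : ∀ i j : Fin n, (i : ℕ) < j → (G.Adj (c i) (c j) ↔ (cycleGraph n).Adj i j) := by
      intro i j h
      rw [hadj _ _ h j.2, SimpleGraph.cycleGraph_adj']
      have h1 : ((j - i : Fin n) : ℕ) = j - i := Fin.sub_val_of_le h.le
      have h2 : ((i - j : Fin n) : ℕ) = n + i - j := by
        rw [Fin.coe_sub_iff_lt.2 h]
      omega
    intro i j
    rcases lt_trichotomy (i : ℕ) j with h | h | h
    · exact key i j h
    · obtain rfl := Fin.ext h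
      simp
    · rw [G.adj_comm, key j i h, SimpleGraph.adj_comm]

/-- A chordless path `p` with wings `w 0, w 1` seeing only its first vertex and `w 2, w 3` seeing only
its last one is an induced H-graph, provided that no left wing sees a right wing and that the pairs
of wings are not tight on the left only. -/
theorem containsCanonical_of_hGraph {β : Type*} {G : SimpleGraph β} {s m : ℕ} (p : ℕ → β)
    (w : Fin 4 → β) (hm : 2 ≤ m) (hs : s ≤ m)
    (hinj : ∀ i j, i < j → j < m → p i ≠ p j)
    (hadj : ∀ i j, i < j → j < m → (G.Adj (p i) (p j) ↔ j = i + 1))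
    (hw : Function.Injective w) (hwp : ∀ a i, i < m → w a ≠ p i)
    (hwadj : ∀ a i, i < m →
      (G.Adj (w a) (p i) ↔ ((a : ℕ) < 2 ∧ i = 0) ∨ (2 ≤ (a : ℕ) ∧ i + 1 = m)))
    (hcross : ∀ a b : Fin 4, (a : ℕ) < 2 → 2 ≤ (b : ℕ) → ¬ G.Adj (w a) (w b))
    (htight : G.Adj (w 0) (w 1) → G.Adj (w 2) (w 3)) :
    ContainsCanonical G s := by
  have hemb : ∀ (lt rt : Prop), (lt ↔ G.Adj (w 0) (w 1)) → (rt ↔ G.Adj (w 2) (w 3)) →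
      ContainsInd (hGraph m lt rt) G := by
    intro lt rt hlt hrt
    have hpp : ∀ i j : Fin m, (G.Adj (p i) (p j) ↔ (i : ℕ) + 1 = j ∨ (j : ℕ) + 1 = i) := by
      intro i j
      rcases lt_trichotomy (i : ℕ) j with h | h | h
      · rw [hadj _ _ h j.2]; omega
      · rw [h]; simp
      · rw [G.adj_comm, hadj _ _ h i.2]; omega
    refine containsInd_of_map (Sum.elim (fun i : Fin m => p i) w) ?_ ?_
    · rintro (i | a) (j | b) h
      · simp only [Sum.elim_inl] at h
        rcases lt_trichotomy (i : ℕ) j with h' | h' | h'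
        · exact absurd h (hinj _ _ h' j.2)
        · rw [Fin.ext h']
        · exact absurd h.symm (hinj _ _ h' i.2)
      · exact absurd h.symm (hwp b i i.2)
      · exact absurd h (hwp a j j.2)
      · exact congrArg _ (hw h)
    · rintro (i | a) (j | b)
      · simp only [Sum.elim_inl, hpp, hGraph, SimpleGraph.fromRel_adj,
          ne_eq, Sum.inl.injEq, Fin.ext_iff]
        omega
      · simp only [Sum.elim_inl, Sum.elim_inr, hGraph,
          SimpleGraph.fromRel_adj, ne_eq, reduceCtorEq, not_false_eq_true, true_and, false_or]
        rw [G.adj_comm, hwadj _ _ i.2]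
      · simp only [Sum.elim_inl, Sum.elim_inr, hGraph,
          SimpleGraph.fromRel_adj, ne_eq, reduceCtorEq, not_false_eq_true, true_and, or_false]
        rw [hwadj _ _ j.2]
      · simp only [Sum.elim_inr, hGraph,
          SimpleGraph.fromRel_adj, ne_eq, Sum.inr.injEq]
        have h02 := hcross 0 2 (by decide) (by decide)
        have h03 := hcross 0 3 (by decide) (by decide)
        have h12 := hcross 1 2 (by decide) (by decide)
        have h13 := hcross 1 3 (by decide) (by decide)
        have h20 : ¬ G.Adj (w 2) (w 0) := fun h => h02 h.symm
        have h30 : ¬ G.Adj (w 3) (w 0) := fun h => h03 h.symm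
        have h21 : ¬ G.Adj (w 2) (w 1) := fun h => h12 h.symm
        have h31 : ¬ G.Adj (w 3) (w 1) := fun h => h13 h.symm
        have e10 := G.adj_comm (w 1) (w 0)
        have e32 := G.adj_comm (w 3) (w 2)
        fin_cases a <;> fin_cases b <;> simp [*]
  refine Or.inr ⟨m, by omega, hs, ?_⟩
  by_cases hr : G.Adj (w 2) (w 3)
  · by_cases hl : G.Adj (w 0) (w 1)
    · exact ⟨2, hemb _ _ (by simpa using hl) (by simpa using hr)⟩
    · exact ⟨1, hemb _ _ (by simpa using hl) (by simpa using hr)⟩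
  · exact ⟨0, hemb _ _ (by simpa using fun h => hr (htight h)) (by simpa using hr)⟩

/-- A chordless path with two wings at each end always yields a canonical graph: an edge between a left
and a right wing closes a hole through the whole path, and if there is none the configuration is an
H-graph, possibly after reversal. -/
theorem containsCanonical_of_wings {β : Type*} {G : SimpleGraph β} {s m : ℕ} (p : ℕ → β)
    (w : Fin 4 → β) (hm : 2 ≤ m) (hs : s ≤ m)
    (hinj : ∀ i j, i < j → j < m → p i ≠ p j)
    (hadj : ∀ i j, i < j → j < m → (G.Adj (p i) (p j) ↔ j = i + 1))
    (hw : Function.Injective w) (hwp : ∀ a i, i < m → w a ≠ p i)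
    (hwadj : ∀ a i, i < m →
      (G.Adj (w a) (p i) ↔ ((a : ℕ) < 2 ∧ i = 0) ∨ (2 ≤ (a : ℕ) ∧ i + 1 = m))) :
    ContainsCanonical G s := by
  by_cases hcross : ∀ a b : Fin 4, (a : ℕ) < 2 → 2 ≤ (b : ℕ) → ¬ G.Adj (w a) (w b)
  · by_cases htight : G.Adj (w 0) (w 1) → G.Adj (w 2) (w 3)
    · exact containsCanonical_of_hGraph p w hm hs hinj hadj hw hwp hwadj hcross htight
    · -- Only the left wings are adjacent: read the H-graph from right to left.
      push Not at htight
      have h4 : ∀ a : Fin 4, ((a + 2 : Fin 4) : ℕ) < 2 ↔ 2 ≤ (a : ℕ) := by decide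
      have h4' : ∀ a : Fin 4, 2 ≤ ((a + 2 : Fin 4) : ℕ) ↔ (a : ℕ) < 2 := by decide
      refine containsCanonical_of_hGraph (fun i => p (m - 1 - i)) (fun a => w (a + 2)) hm hs
        ?_ ?_ ?_ ?_ ?_ ?_ ?_
      · intro i j h1 h2
        exact (hinj _ _ (by omega) (by omega)).symm
      · intro i j h1 h2
        rw [G.adj_comm, hadj _ _ (by omega) (by omega)]
        omega
      · exact hw.comp (add_left_injective 2)
      · intro a i h
        exact hwp _ _ (by omega)
      · intro a i h
        rw [hwadj _ _ (by omega), h4, h4']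
        omega
      · intro a b ha hb h
        exact hcross _ _ ((h4 b).2 hb) ((h4' a).2 ha) (h.symm)
      · intro h
        exact absurd h htight.2
  · push Not at hcross
    obtain ⟨a, b, ha, hb, hab⟩ := hcross
    have hne : w a ≠ w b := hw.ne (by intro h; rw [h] at ha; omega)
    refine containsCanonical_of_cycle (n := m + 2)
      (fun i => if i = 0 then w a else if i = m + 1 then w b else p (i - 1))
      (by omega) (by omega) ?_ ?_
    · intro i j hij hj
      by_cases h0 : i = 0 <;> by_cases h1 : j = m + 1
      · simp [h0, h1, hne]
      · have : j ≠ 0 := by omega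
        simpa [h0, h1, this] using hwp a (j - 1) (by omega)
      · have : i ≠ m + 1 := by omega
        simpa [h0, h1, this] using (hwp b (i - 1) (by omega)).symm
      · have h2 : i ≠ m + 1 := by omega
        have h3 : j ≠ 0 := by omega
        simpa [h0, h1, h2, h3] using hinj (i - 1) (j - 1) (by omega) (by omega)
    · intro i j hij hj
      by_cases h0 : i = 0 <;> by_cases h1 : j = m + 1
      · simp [h0, h1, hab]
      · have : j ≠ 0 := by omega
        simp only [h0, h1, this, if_true, if_false]
        rw [hwadj a (j - 1) (by omega)]
        omega
      · have h2 : i ≠ m + 1 := by omega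
        simp only [h0, h1, h2, if_true, if_false]
        rw [G.adj_comm, if_neg (show m + 1 ≠ 0 by omega), hwadj b (i - 1) (by omega)]
        simp only [false_and, or_false]
        omega
      · have h2 : i ≠ m + 1 := by omega
        have h3 : j ≠ 0 := by omega
        simp only [h0, h1, h2, h3, if_false]
        rw [hadj (i - 1) (j - 1) (by omega) (by omega)]
        grind

/-! ### From a long gap to a canonical graph -/

/-- The left end of a long root-free gap, as it appears in a minimal rake. The vertices `v 1` and
`v (m + 1)` are the consecutive roots, `v 0` and `v (m + 2)` their outer neighbours on the base, and
`t` is the tooth of `v 1`. Adjacency of `v 0` to `v (m + 1)`, and of `t` to `v 2` and `v 3`, is left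
open. -/
structure IsLeftEnd {β : Type*} (G : SimpleGraph β) (m : ℕ) (v : ℕ → β) (t : β) : Prop where
  tooth_ne : ∀ i, i < m + 3 → t ≠ v i
  adj_zero : G.Adj (v 0) (v 1)
  adj_tooth : G.Adj t (v 1)
  not_adj_zero : ∀ q, 2 ≤ q → q ≤ m → ¬ G.Adj (v 0) (v q)
  not_adj_tooth : ∀ q, 4 ≤ q → q ≤ m + 1 → ¬ G.Adj t (v q)

/-- The body of the H-graph starts at the last neighbour `v e` of the tooth `t` in the gap, so `e ≤ 3`;
its two wings are `t` and an earlier vertex `v w`, namely the predecessor of `v e`. -/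
theorem IsLeftEnd.exists_wings {β : Type*} {G : SimpleGraph β} {m : ℕ} {v : ℕ → β} {t : β}
    (h : IsLeftEnd G m v t) (hm : 5 ≤ m)
    (hadj : ∀ i j, 1 ≤ i → i < j → j ≤ m + 1 → (G.Adj (v i) (v j) ↔ j = i + 1))
    (hhole : ¬ G.Adj (v 0) (v (m + 1))) :
    ∃ e w, 1 ≤ e ∧ e ≤ 3 ∧ w < e ∧ ∀ x, (x = t ∨ x = v w) →
      G.Adj x (v e) ∧ ∀ q, e < q → q ≤ m + 1 → ¬ G.Adj x (v q) := by
  have key : ∀ e, 1 ≤ e → e ≤ 3 → G.Adj t (v e) →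
      (∀ q, e < q → q ≤ m + 1 → ¬ G.Adj t (v q)) →
      ∃ e w, 1 ≤ e ∧ e ≤ 3 ∧ w < e ∧ ∀ x, (x = t ∨ x = v w) →
      G.Adj x (v e) ∧ ∀ q, e < q → q ≤ m + 1 → ¬ G.Adj x (v q) := by
    intro e h1 h3 ha hn
    refine ⟨e, e - 1, h1, h3, by omega, ?_⟩
    rintro x (rfl | rfl)
    · exact ⟨ha, hn⟩
    · rcases Nat.lt_or_ge e 2 with h2 | h2
      · obtain rfl : e = 1 := by omega
        refine ⟨h.adj_zero, fun q hq hq' => ?_⟩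
        rcases Nat.lt_or_ge m q with h5 | h5
        · obtain rfl : q = m + 1 := by omega
          exact hhole
        · exact h.not_adj_zero q hq h5
      · refine ⟨(hadj _ _ (by omega) (by omega) (by omega)).2 (by omega), fun q hq hq' h => ?_⟩
        have := (hadj _ _ (by omega) (by omega) (by omega)).1 h
        omega
  have h4 := h.not_adj_tooth
  by_cases c3 : G.Adj t (v 3)
  · exact key 3 (by omega) (by omega) c3 fun q hq hq' => h4 q hq hq'
  have h3 : ∀ q, 3 ≤ q → q ≤ m + 1 → ¬ G.Adj t (v q) := by
    intro q hq hq'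
    rcases hq.eq_or_lt with rfl | h5
    · exact c3
    · exact h4 q h5 hq'
  by_cases c2 : G.Adj t (v 2)
  · exact key 2 (by omega) (by omega) c2 fun q hq hq' => h3 q hq hq'
  refine key 1 (by omega) (by omega) h.adj_tooth fun q hq hq' => ?_
  rcases (show 2 ≤ q from hq).eq_or_lt with rfl | h5
  · exact c2
  · exact h3 q h5 (by omega)

/-- A gap with `m + 1` vertices from root to root and well-behaved ends contains a canonical graph.
Trimming costs at most two vertices on each side. -/
theorem containsCanonical_of_ends {β : Type*} {G : SimpleGraph β} {s m : ℕ} {v : ℕ → β}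
    {t t' : β} (hm : s + 5 ≤ m)
    (hinj : ∀ i j, i < j → j < m + 3 → v i ≠ v j)
    (hadj : ∀ i j, 1 ≤ i → i < j → j ≤ m + 1 → (G.Adj (v i) (v j) ↔ j = i + 1))
    (hl : IsLeftEnd G m v t) (hr : IsLeftEnd G m (fun i => v (m + 2 - i)) t') (htt : t ≠ t') :
    ContainsCanonical G s := by
  have hinj' : ∀ i j, i < j → j < m + 3 → v (m + 2 - i) ≠ v (m + 2 - j) := fun i j h1 h2 =>
    (hinj _ _ (by omega) (by omega)).symm
  have hadj' : ∀ i j, 1 ≤ i → i < j → j ≤ m + 1 →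
      (G.Adj (v (m + 2 - i)) (v (m + 2 - j)) ↔ j = i + 1) := by
    intro i j h1 h2 h3
    rw [G.adj_comm, hadj _ _ (by omega) (by omega) (by omega)]
    omega
  by_cases h1 : G.Adj (v 0) (v (m + 1))
  · refine containsCanonical_of_cycle (n := m + 2) v (by omega) (by omega)
      (fun i j h2 h3 => hinj i j h2 (by omega)) fun i j h2 h3 => ?_
    rcases Nat.eq_zero_or_pos i with rfl | hi
    · rcases Nat.lt_or_ge j 2 with h4 | h4
      · obtain rfl : j = 1 := by omega
        simpa using hl.adj_zero
      · rcases Nat.lt_or_ge m j with h5 | h5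
        · obtain rfl : j = m + 1 := by omega
          simpa using h1
        · have := hl.not_adj_zero j h4 h5
          simp only [this, false_iff]
          omega
    · rw [hadj _ _ hi h2 (by omega)]
      omega
  by_cases h2 : G.Adj (v (m + 2 - 0)) (v (m + 2 - (m + 1)))
  · refine containsCanonical_of_cycle (n := m + 2) (fun i => v (m + 2 - i)) (by omega) (by omega)
      (fun i j h2 h3 => hinj' i j h2 (by omega)) fun i j h4 h3 => ?_
    rcases Nat.eq_zero_or_pos i with rfl | hi
    · rcases Nat.lt_or_ge j 2 with h4 | h4
      · obtain rfl : j = 1 := by omega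
        simpa using hr.adj_zero
      · rcases Nat.lt_or_ge m j with h5 | h5
        · obtain rfl : j = m + 1 := by omega
          simpa using h2
        · have := hr.not_adj_zero j h4 h5
          simp only [this, false_iff]
          omega
    · rw [hadj' _ _ hi h4 (by omega)]
      omega
  obtain ⟨e, a, he1, he3, hae, hx⟩ := hl.exists_wings (by omega) hadj h1
  obtain ⟨f, b, hf1, hf3, hbf, hy⟩ := hr.exists_wings (by omega) hadj' h2
  have hl' := hl.tooth_ne
  have hr' : ∀ i, i < m + 3 → t' ≠ v i := by
    intro i hi
    have := hr.tooth_ne (m + 2 - i) (by omega)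
    rwa [show m + 2 - (m + 2 - i) = i by omega] at this
  have hbe : ∀ i, i < m + 3 - e - f → i + 1 = m + 3 - e - f → e + i = m + 2 - f := by omega
  have hleft : ∀ x, (x = t ∨ x = v a) → ∀ i, i < m + 3 - e - f →
      (G.Adj x (v (e + i)) ↔ i = 0) := by
    intro x hx' i hi
    rcases Nat.eq_zero_or_pos i with rfl | h0
    · simpa using (hx x hx').1
    · have := (hx x hx').2 (e + i) (by omega) (by omega)
      simp only [this, false_iff]
      omega
  have hright : ∀ x, (x = t' ∨ x = v (m + 2 - b)) → ∀ i, i < m + 3 - e - f →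
      (G.Adj x (v (e + i)) ↔ i + 1 = m + 3 - e - f) := by
    intro x hx' i hi
    by_cases h0 : i + 1 = m + 3 - e - f
    · have := (hy x hx').1
      rw [← hbe i hi h0] at this
      simp only [this, h0]
    · have := (hy x hx').2 (m + 2 - (e + i)) (by omega) (by omega)
      rw [show m + 2 - (m + 2 - (e + i)) = e + i by omega] at this
      simp only [this, h0]
  refine containsCanonical_of_wings (m := m + 3 - e - f) (fun i => v (e + i))
    ![t, v a, t', v (m + 2 - b)] (by omega) (by omega)
    (fun i j h3 h4 => hinj _ _ (by omega) (by omega)) ?_ ?_ ?_ ?_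
  · intro i j h3 h4
    rw [hadj _ _ (by omega) (by omega) (by omega)]
    omega
  · have n1 := hl' a (by omega)
    have n2 := hl' (m + 2 - b) (by omega)
    have n3 := hr' a (by omega)
    have n4 := hr' (m + 2 - b) (by omega)
    have n5 := hinj a (m + 2 - b) (by omega) (by omega)
    intro i j
    fin_cases i <;> fin_cases j <;> simp [n1, n2, n3, n4, n5, n1.symm, n2.symm, n3.symm, n4.symm,
      n5.symm, htt, htt.symm]
  · intro i j hj
    fin_cases i
    · exact hl' _ (by omega)
    · exact hinj _ _ (by omega) (by omega)
    · exact hr' _ (by omega)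
    · exact (hinj _ _ (by omega) (by omega)).symm
  · intro i j hj
    fin_cases i
    · simpa using hleft _ (Or.inl rfl) j hj
    · simpa using hleft _ (Or.inr rfl) j hj
    · simpa using hright _ (Or.inl rfl) j hj
    · simpa using hright _ (Or.inr rfl) j hj

/-! ### Minimal rakes and shortcuts -/

/-- A rake in `G`, encoded by the list `L` of its base vertices in order, the set `R` of its roots, and
a function `τ` giving the tooth `τ r` of each root `r` (its values outside `R` are irrelevant). Since
roots are vertices rather than positions, shortening the base needs no reindexing. -/
structure IsRake {β : Type*} (G : SimpleGraph β) (L : List β) (R : Finset β) (τ : β → β) :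
    Prop where
  nodup : L.Nodup
  chain : L.IsChain G.Adj
  root_mem : ∀ r ∈ R, r ∈ L
  adj : ∀ r ∈ R, G.Adj (τ r) r
  tooth_inj : ∀ r ∈ R, ∀ r' ∈ R, τ r = τ r' → r = r'
  tooth_notMem : ∀ r ∈ R, τ r ∉ L

/-- A rake whose base is shortest among all rakes of `G` with the same number of roots. -/
structure IsMinRake {β : Type*} (G : SimpleGraph β) (L : List β) (R : Finset β) (τ : β → β) :
    Prop extends IsRake G L R τ where
  le_length : ∀ L' R' τ', IsRake G L' R' τ' → R'.card = R.card → L.length ≤ L'.length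

theorem IsMinRake.reverse {β : Type*} {G : SimpleGraph β} {L : List β} {R : Finset β} {τ : β → β}
    (h : IsMinRake G L R τ) : IsMinRake G L.reverse R τ where
  nodup := List.nodup_reverse.2 h.nodup
  chain := by
    rw [List.isChain_reverse]
    exact h.chain.imp fun a b hab => hab.symm
  root_mem r hr := List.mem_reverse.2 (h.root_mem r hr)
  adj := h.adj
  tooth_inj := h.tooth_inj
  tooth_notMem r hr := by simpa using h.tooth_notMem r hr
  le_length := by simpa using h.le_length

/-- A nonempty stretch `Y` of the base without roots cannot be bypassed: the shorter base would carry
the same teeth. -/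
theorem IsMinRake.not_adj_of_shortcut {β : Type*} {G : SimpleGraph β} {L : List β} {R : Finset β}
    {τ : β → β} (h : IsMinRake G L R τ) {A Y B : List β} {x z : β}
    (hL : L = A ++ x :: (Y ++ z :: B)) (hY : Y ≠ []) (hR : ∀ y ∈ Y, y ∉ R) : ¬ G.Adj x z := by
  intro hxz
  subst hL
  have hsub : (A ++ x :: z :: B).Sublist (A ++ x :: (Y ++ z :: B)) :=
    (List.Sublist.refl A).append ((List.sublist_append_right Y (z :: B)).cons_cons x)
  have hlen : 0 < Y.length := List.length_pos_iff.2 hY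
  have hc1 := List.isChain_split.1 h.chain
  have hc2 := (List.isChain_split (l₁ := x :: Y)).1 hc1.2
  have := h.le_length (A ++ x :: z :: B) R τ
    { nodup := h.nodup.sublist hsub
      chain := by
        rw [List.isChain_split, List.isChain_cons_cons]
        exact ⟨hc1.1, hxz, hc2.2⟩
      root_mem := fun r hr => by
        have h1 := h.root_mem r hr
        have h2 := hR r
        simp only [List.mem_append, List.mem_cons] at h1 ⊢
        tauto
      adj := h.adj
      tooth_inj := h.tooth_inj
      tooth_notMem := fun r hr h' => h.tooth_notMem r hr (hsub.subset h') } rfl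
  simp only [List.length_append, List.length_cons] at this
  omega

/-- A stretch `Y` containing a single root `r` cannot be bypassed by an edge to a non-root `z`: on the
shorter base, `z` becomes a root in place of `r`, with a neighbour `u` on the bypassed stretch
as tooth. -/
theorem IsMinRake.not_adj_of_root_shift {β : Type*} {G : SimpleGraph β} {L : List β}
    {R : Finset β} {τ : β → β} (h : IsMinRake G L R τ) {A Y B : List β} {x z r u : β}
    (hL : L = A ++ x :: (Y ++ z :: B)) (hr : r ∈ R) (hrY : r ∈ Y) (hR : ∀ y ∈ Y, y ∈ R → y = r)
    (hz : z ∉ R) (hu : u ∈ Y) (huz : G.Adj u z) : ¬ G.Adj x z := by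
  classical
  intro hxz
  subst hL
  have hsub : (A ++ x :: z :: B).Sublist (A ++ x :: (Y ++ z :: B)) :=
    (List.Sublist.refl A).append ((List.sublist_append_right Y (z :: B)).cons_cons x)
  have hlen : 0 < Y.length := List.length_pos_of_mem hrY
  have hc1 := List.isChain_split.1 h.chain
  have hc2 := (List.isChain_split (l₁ := x :: Y)).1 hc1.2
  have hnd := h.nodup
  have huL : u ∈ A ++ x :: (Y ++ z :: B) := by simp [hu]
  have hu' : u ∉ A ++ x :: z :: B := by
    simp only [List.nodup_append, List.nodup_cons, List.mem_append, List.mem_cons] at hnd ⊢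
    grind
  have hτ : ∀ y ∈ R, Function.update τ z u y = τ y := fun y hy =>
    Function.update_of_ne (by rintro rfl; exact hz hy) _ _
  have := h.le_length (A ++ x :: z :: B) (insert z (R.erase r)) (Function.update τ z u)
    { nodup := hnd.sublist hsub
      chain := by
        rw [List.isChain_split, List.isChain_cons_cons]
        exact ⟨hc1.1, hxz, hc2.2⟩
      root_mem := fun y hy => by
        have h1 := h.root_mem y
        have h2 := hR y
        simp only [List.mem_append, List.mem_cons, Finset.mem_insert, Finset.mem_erase] at h1 hy ⊢
        tauto
      adj := fun y hy => by
        rcases Finset.mem_insert.1 hy with rfl | hy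
        · simpa using huz
        · have hy := Finset.mem_of_mem_erase hy
          rw [hτ y hy]
          exact h.adj y hy
      tooth_inj := fun y hy y' hy' heq => by
        have hn := h.tooth_notMem
        rcases Finset.mem_insert.1 hy with hyz | hy <;>
          rcases Finset.mem_insert.1 hy' with hyz' | hy'
        · rw [hyz, hyz']
        · have hy' := Finset.mem_of_mem_erase hy'
          rw [hyz, hτ y' hy', Function.update_self] at heq
          exact absurd (heq ▸ huL) (hn y' hy')
        · have hy := Finset.mem_of_mem_erase hy
          rw [hyz', hτ y hy, Function.update_self] at heq
          exact absurd (heq ▸ huL) (hn y hy)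
        · have hy := Finset.mem_of_mem_erase hy
          have hy' := Finset.mem_of_mem_erase hy'
          rw [hτ y hy, hτ y' hy'] at heq
          exact h.tooth_inj y hy y' hy' heq
      tooth_notMem := fun y hy h' => by
        rcases Finset.mem_insert.1 hy with rfl | hy
        · rw [Function.update_self] at h'
          exact hu' h'
        · have hy := Finset.mem_of_mem_erase hy
          rw [hτ y hy] at h'
          exact h.tooth_notMem y hy (hsub.subset h') }
    (by rw [Finset.card_insert_of_notMem (fun h => hz (Finset.mem_of_mem_erase h)),
          Finset.card_erase_add_one hr])
  simp only [List.length_append, List.length_cons] at this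
  omega

/-- A tooth cannot be used to bypass two or more non-roots following its root `r`: the tooth would enter
the base, and a neighbour `u` of `r` on the bypassed stretch would become the new tooth of `r`. -/
theorem IsMinRake.not_adj_tooth {β : Type*} {G : SimpleGraph β} {L : List β}
    {R : Finset β} {τ : β → β} (h : IsMinRake G L R τ) {A Y B : List β} {z r u : β}
    (hL : L = A ++ r :: (Y ++ z :: B)) (hr : r ∈ R) (hR : ∀ y ∈ Y, y ∉ R)
    (hlen : 2 ≤ Y.length) (hu : u ∈ Y) (hur : G.Adj u r) : ¬ G.Adj (τ r) z := by
  classical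
  intro htz
  subst hL
  have hsub : (A ++ r :: z :: B).Sublist (A ++ r :: (Y ++ z :: B)) :=
    (List.Sublist.refl A).append ((List.sublist_append_right Y (z :: B)).cons_cons r)
  have hc1 := List.isChain_split.1 h.chain
  have hc2 := (List.isChain_split (l₁ := r :: Y)).1 hc1.2
  have hnd := h.nodup
  have huL : u ∈ A ++ r :: (Y ++ z :: B) := by simp [hu]
  have htL := h.tooth_notMem r hr
  have htu : u ≠ τ r := fun h => htL (h ▸ huL)
  have hu' : u ∉ A ++ r :: τ r :: z :: B := by
    simp only [List.nodup_append, List.nodup_cons, List.mem_append, List.mem_cons] at hnd ⊢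
    grind
  have hτ : ∀ y, y ≠ r → Function.update τ r u y = τ y := fun y hy =>
    Function.update_of_ne hy _ _
  have := h.le_length (A ++ r :: τ r :: z :: B) R (Function.update τ r u)
    { nodup := by
        have := hnd.sublist hsub
        have ht' : τ r ∉ A ++ r :: z :: B := fun h' => htL (hsub.subset h')
        simp only [List.nodup_append, List.nodup_cons, List.mem_append, List.mem_cons] at this ht' ⊢
        grind
      chain := by
        rw [List.isChain_split, List.isChain_cons_cons, List.isChain_cons_cons]
        exact ⟨hc1.1, (h.adj r hr).symm, htz, hc2.2⟩
      root_mem := fun y hy => by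
        have h1 := h.root_mem y hy
        have h2 := hR y
        simp only [List.mem_append, List.mem_cons] at h1 ⊢
        tauto
      adj := fun y hy => by
        by_cases hyr : y = r
        · subst hyr
          simpa using hur
        · rw [hτ y hyr]
          exact h.adj y hy
      tooth_inj := fun y hy y' hy' heq => by
        have hn := h.tooth_notMem
        by_cases hyr : y = r <;> by_cases hyr' : y' = r
        · rw [hyr, hyr']
        · rw [hyr, hτ y' hyr', Function.update_self] at heq
          exact absurd (heq ▸ huL) (hn y' hy')
        · rw [hyr', hτ y hyr, Function.update_self] at heq
          exact absurd (heq ▸ huL) (hn y hy)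
        · rw [hτ y hyr, hτ y' hyr'] at heq
          exact h.tooth_inj y hy y' hy' heq
      tooth_notMem := fun y hy h' => by
        by_cases hyr : y = r
        · rw [hyr, Function.update_self] at h'
          exact hu' h'
        · rw [hτ y hyr] at h'
          have h1 := h.tooth_notMem y hy
          have h2 : τ y ≠ τ r := fun h' => hyr (h.tooth_inj y hy r hr h')
          simp only [List.mem_append, List.mem_cons] at h' h1
          tauto } rfl
  simp only [List.length_append, List.length_cons] at this
  omega

/-! ### Gaps in minimal rakes -/

/-- If the sequence `v 0, …, v (n - 1)` is a segment of `L`, then `L` splits at any two of its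
positions. -/
theorem eq_append_of_lt {β : Type*} {v : ℕ → β} {L A C : List β} {n p q : ℕ}
    (hL : L = A ++ ((List.range' 0 n).map v ++ C)) (hpq : p < q) (hq : q < n) :
    ∃ A' B', L = A' ++ v p :: ((List.range' (p + 1) (q - p - 1)).map v ++ v q :: B') := by
  obtain ⟨d, rfl⟩ : ∃ d, q = p + 1 + d := ⟨q - p - 1, by omega⟩
  obtain ⟨e, rfl⟩ : ∃ e, n = p + 1 + d + 1 + e := ⟨n - (p + 1 + d) - 1, by omega⟩
  refine ⟨A ++ (List.range' 0 p).map v, (List.range' (p + 1 + d + 1) e).map v ++ C, ?_⟩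
  have h1 : List.range' 0 (p + 1 + d + 1 + e) =
      List.range' 0 p ++ p :: (List.range' (p + 1) d ++ (p + 1 + d) ::
        List.range' (p + 1 + d + 1) e) := by
    rw [← List.range'_succ, List.range'_append_1, ← List.range'_succ]
    have h2 := List.range'_append_1 (s := 0) (m := p) (n := d + (e + 1) + 1)
    rw [Nat.zero_add] at h2
    rw [h2]
    congr 1
    omega
  rw [hL, h1, show p + 1 + d - p - 1 = d by omega]
  simp

theorem ne_of_nodup_append {β : Type*} {v : ℕ → β} {L A C : List β} {n p q : ℕ}
    (hL : L = A ++ ((List.range' 0 n).map v ++ C)) (hnd : L.Nodup) (hpq : p < q) (hq : q < n) :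
    v p ≠ v q := by
  obtain ⟨A', B', h⟩ := eq_append_of_lt hL hpq hq
  rw [h] at hnd
  simp only [List.nodup_append, List.nodup_cons, List.mem_append, List.mem_cons] at hnd
  grind

theorem adj_of_isChain_append {β : Type*} {G : SimpleGraph β} {v : ℕ → β} {L A C : List β}
    {n p : ℕ} (hL : L = A ++ ((List.range' 0 n).map v ++ C)) (hc : L.IsChain G.Adj)
    (hp : p + 1 < n) : G.Adj (v p) (v (p + 1)) := by
  obtain ⟨A', B', h⟩ := eq_append_of_lt hL (Nat.lt_succ_self p) hp
  rw [h, List.isChain_split, show p + 1 - p - 1 = 0 by omega] at hc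
  simpa using (List.isChain_cons_cons.1 hc.2).1

/-- In a minimal rake the base path between two consecutive roots is chordless. -/
theorem IsMinRake.adj_iff {β : Type*} {G : SimpleGraph β} {L : List β} {R : Finset β} {τ : β → β}
    (h : IsMinRake G L R τ) {v : ℕ → β} {A C : List β} {m : ℕ}
    (hL : L = A ++ ((List.range' 0 (m + 3)).map v ++ C))
    (hR : ∀ q, 2 ≤ q → q ≤ m → v q ∉ R) {i j : ℕ} (hi : 1 ≤ i) (hij : i < j) (hj : j ≤ m + 1) :
    G.Adj (v i) (v j) ↔ j = i + 1 := by
  constructor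
  · intro hadj
    by_contra hne
    obtain ⟨A', B', h'⟩ := eq_append_of_lt hL hij (by omega)
    refine h.not_adj_of_shortcut h' ?_ ?_ hadj
    · simp only [ne_eq, List.map_eq_nil_iff, List.range'_eq_nil_iff]
      omega
    · simp only [List.mem_map, List.mem_range'_1]
      rintro _ ⟨q, hq, rfl⟩
      exact hR q (by omega) (by omega)
  · rintro rfl
    exact adj_of_isChain_append hL h.chain (by omega)

theorem IsMinRake.isLeftEnd {β : Type*} {G : SimpleGraph β} {L : List β} {R : Finset β}
    {τ : β → β} (h : IsMinRake G L R τ) {v : ℕ → β} {A C : List β} {m : ℕ}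
    (hL : L = A ++ ((List.range' 0 (m + 3)).map v ++ C)) (h1 : v 1 ∈ R)
    (hR : ∀ q, 2 ≤ q → q ≤ m → v q ∉ R) : IsLeftEnd G m v (τ (v 1)) where
  tooth_ne i hi heq := by
    refine h.tooth_notMem _ h1 (heq ▸ ?_)
    rw [hL]
    simp only [List.mem_append, List.mem_map, List.mem_range'_1]
    exact Or.inr (Or.inl ⟨i, by omega, rfl⟩)
  adj_zero := adj_of_isChain_append hL h.chain (by omega)
  adj_tooth := h.adj _ h1
  not_adj_zero q hq hqm := by
    obtain ⟨A', B', h'⟩ := eq_append_of_lt hL (show 0 < q by omega) (by omega)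
    have hmem : ∀ i, 1 ≤ i → i < q → v i ∈ (List.range' (0 + 1) (q - 0 - 1)).map v := by
      intro i hi hiq
      simp only [List.mem_map, List.mem_range'_1]
      exact ⟨i, by omega, rfl⟩
    refine h.not_adj_of_root_shift h' h1 (hmem 1 le_rfl (by omega)) ?_ (hR q hq hqm)
      (hmem (q - 1) (by omega) (by omega)) ?_
    · simp only [List.mem_map, List.mem_range'_1]
      rintro _ ⟨i, hi, rfl⟩ hiR
      rcases (show 1 ≤ i by omega).eq_or_lt with rfl | hi'
      · rfl
      · exact absurd hiR (hR i hi' (by omega))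
    · have := adj_of_isChain_append (p := q - 1) hL h.chain (by omega)
      rwa [show q - 1 + 1 = q by omega] at this
  not_adj_tooth q hq hqm := by
    obtain ⟨A', B', h'⟩ := eq_append_of_lt hL (show 1 < q by omega) (by omega)
    refine h.not_adj_tooth (u := v 2) h' h1 ?_ ?_ ?_ ?_
    · simp only [List.mem_map, List.mem_range'_1]
      rintro _ ⟨i, hi, rfl⟩
      exact hR i (by omega) (by omega)
    · simp only [List.length_map, List.length_range']
      omega
    · simp only [List.mem_map, List.mem_range'_1]
      exact ⟨2, by omega, rfl⟩
    · exact (adj_of_isChain_append (p := 1) hL h.chain (by omega)).symm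

/-- Two consecutive roots `r`, `r'` of a minimal rake that are not the ends of the base and are
separated by at least `s + 5` non-roots give a canonical graph of order at least `s`. -/
theorem IsMinRake.containsCanonical_of_gap {β : Type*} {G : SimpleGraph β} {L : List β}
    {R : Finset β} {τ : β → β} (h : IsMinRake G L R τ) {s : ℕ} {A M C : List β} {r r' : β}
    (hL : L = A ++ r :: (M ++ r' :: C)) (hA : A ≠ []) (hC : C ≠ []) (hr : r ∈ R) (hr' : r' ∈ R)
    (hM : ∀ x ∈ M, x ∉ R) (hlen : s + 5 ≤ M.length) : ContainsCanonical G s := by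
  obtain ⟨A, a, rfl⟩ : ∃ A' a, A = A' ++ [a] := ⟨_, _, (List.dropLast_append_getLast hA).symm⟩
  obtain ⟨c, C, rfl⟩ := List.exists_cons_of_ne_nil hC
  obtain ⟨m, hm⟩ : ∃ m, m = M.length + 1 := ⟨_, rfl⟩
  -- `W` runs from the outer neighbour of `r` to that of `r'`, so `r = v 1` and `r' = v (m + 1)`.
  set W := a :: r :: (M ++ [r', c]) with hW
  let v : ℕ → β := fun i => W.getD i a
  have hWlen : W.length = m + 3 := by
    simp only [hW, hm, List.length_cons, List.length_append, List.length_nil]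
  have hmap : (List.range' 0 (m + 3)).map v = W := by
    refine List.ext_getElem (by simp [hWlen]) fun i h1 h2 => ?_
    simp [v, h2]
  have hL' : L = A ++ ((List.range' 0 (m + 3)).map v ++ C) := by
    rw [hmap, hL, hW]
    simp
  have hmapr : (List.range' 0 (m + 3)).map (fun i => v (m + 2 - i)) = W.reverse := by
    refine List.ext_getElem (by simp [hWlen]) fun i h1 h2 => ?_
    simp only [List.length_reverse] at h2
    simp only [List.getElem_map, List.getElem_range', List.getElem_reverse, hWlen, v]
    rw [List.getD_eq_getElem _ _ (by omega)]
    congr 1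
    omega
  have hLr : L.reverse = C.reverse ++
      ((List.range' 0 (m + 3)).map (fun i => v (m + 2 - i)) ++ A.reverse) := by
    rw [hmapr, hL', hmap]
    simp
  have hvM : ∀ q, 2 ≤ q → q ≤ m → v q ∉ R := by
    intro q hq hqm
    obtain ⟨q, rfl⟩ : ∃ q', q = q' + 2 := ⟨q - 2, by omega⟩
    have : v (q + 2) = M[q]'(by omega) := by
      simp only [v, hW, List.getD_cons_succ]
      rw [List.getD_append _ _ _ _ (by omega), List.getD_eq_getElem]
    rw [this]
    exact hM _ (List.getElem_mem _)
  have hv1 : v 1 = r := rfl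
  have hvm : v (m + 1) = r' := by
    simp only [v, hW, List.getD_cons_succ]
    rw [hm, List.getD_cons_succ, List.getD_append_right _ _ _ _ le_rfl]
    simp
  have hinj : ∀ i j, i < j → j < m + 3 → v i ≠ v j := fun i j h1 h2 =>
    ne_of_nodup_append hL' h.nodup h1 h2
  refine containsCanonical_of_ends (t := τ r) (t' := τ r') (by omega) hinj
    (fun i j h1 h2 h3 => h.adj_iff hL' hvM h1 h2 h3) ?_ ?_ ?_
  · exact h.isLeftEnd hL' (hv1 ▸ hr) hvM
  · have := h.reverse.isLeftEnd hLr (by simpa [hvm] using hr')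
      fun q hq hqm => hvM _ (by omega) (by omega)
    simpa [hvm] using this
  · intro heq
    have := h.tooth_inj r hr r' hr' heq
    rw [← hv1, ← hvm] at this
    exact hinj 1 (m + 1) (by omega) (by omega) this

/-! ### Translation to lists and conclusion -/

theorem rakeGraph_adj_base {n k : ℕ} (r : Fin k → Fin n) {i : ℕ} (hi : i + 1 < n) :
    (rakeGraph n k r).Adj (Sum.inl ⟨i, by omega⟩) (Sum.inl ⟨i + 1, hi⟩) := by
  rw [rakeGraph, SimpleGraph.fromRel_adj]
  exact ⟨by simp, Or.inl rfl⟩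

theorem rakeGraph_adj_tooth {n k : ℕ} (r : Fin k → Fin n) (t : Fin k) :
    (rakeGraph n k r).Adj (Sum.inr t) (Sum.inl (r t)) := by
  rw [rakeGraph, SimpleGraph.fromRel_adj]
  exact ⟨by simp, Or.inl rfl⟩

theorem ContainsRake.exists_isRake {β : Type*} {G : SimpleGraph β} {k : ℕ}
    (h : ContainsRake G k) : ∃ L R τ, IsRake G L R τ ∧ R.card = k := by
  classical
  obtain ⟨n, r, hr, f, hf⟩ := h
  have hbase : ∀ i j, f (Sum.inl i) = f (Sum.inl j) → i = j := fun i j hij =>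
    Sum.inl_injective (hf hij)
  let τ : β → β := fun x => if h : ∃ t, f (Sum.inl (r t)) = x then f (Sum.inr h.choose) else x
  have hτ : ∀ t, τ (f (Sum.inl (r t))) = f (Sum.inr t) := by
    intro t
    have hex : ∃ t', f (Sum.inl (r t')) = f (Sum.inl (r t)) := ⟨t, rfl⟩
    have : hex.choose = t := hr (hbase _ _ hex.choose_spec)
    simp only [τ, dif_pos hex, this]
  refine ⟨List.ofFn fun i => f (Sum.inl i), Finset.univ.image fun t => f (Sum.inl (r t)), τ,
    ⟨?_, ?_, ?_, ?_, ?_, ?_⟩, ?_⟩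
  · exact List.nodup_ofFn.2 fun i j hij => hbase _ _ hij
  · rw [List.isChain_iff_getElem]
    intro i hi
    simp only [List.length_ofFn] at hi
    simp only [List.getElem_ofFn]
    exact f.map_adj (rakeGraph_adj_base r hi)
  · simp only [Finset.mem_image, Finset.mem_univ, true_and, List.mem_ofFn]
    rintro _ ⟨t, rfl⟩
    exact ⟨r t, rfl⟩
  · simp only [Finset.mem_image, Finset.mem_univ, true_and]
    rintro _ ⟨t, rfl⟩
    rw [hτ]
    exact f.map_adj (rakeGraph_adj_tooth r t)
  · simp only [Finset.mem_image, Finset.mem_univ, true_and]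
    rintro _ ⟨t, rfl⟩ _ ⟨t', rfl⟩ htt
    rw [hτ, hτ] at htt
    rw [Sum.inr_injective (hf htt)]
  · simp only [Finset.mem_image, Finset.mem_univ, true_and, List.mem_ofFn]
    rintro _ ⟨t, rfl⟩ ⟨i, hi⟩
    rw [hτ] at hi
    exact absurd (hf hi) (by simp)
  · rw [Finset.card_image_of_injective _ fun t t' htt => hr (hbase _ _ htt)]
    simp

theorem IsRake.containsDenseRake {β : Type*} {G : SimpleGraph β} {L : List β} {R : Finset β}
    {τ : β → β} (h : IsRake G L R τ) {k l : ℕ} (hk : R.card = k)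
    (hd : ∀ X W Y, L = X ++ (W ++ Y) → W.length = l → ∃ x ∈ W, x ∈ R) :
    ContainsDenseRake G k l := by
  classical
  let e : Fin k ≃ R := (R.equivFinOfCardEq hk).symm
  have hmem : ∀ t, (e t : β) ∈ L := fun t => h.root_mem _ (e t).2
  let r : Fin k → Fin L.length := fun t => ⟨L.idxOf (e t : β), List.idxOf_lt_length_iff.2 (hmem t)⟩
  have hr : ∀ t, L[(r t : ℕ)] = (e t : β) := fun t => List.getElem_idxOf _
  refine ⟨L.length, r, ?_, ?_, ⟨Sum.elim (fun i => L[(i : ℕ)]) fun t => τ (e t), ?_⟩, ?_⟩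
  · intro t t' htt
    have := hr t
    rw [htt, hr t'] at this
    exact e.injective (Subtype.ext this.symm)
  · intro i hi
    obtain ⟨x, hxW, hxR⟩ := hd (L.take i) ((L.drop i).take l) ((L.drop i).drop l)
      (by simp) (by simp; omega)
    refine ⟨e.symm ⟨x, hxR⟩, ?_⟩
    obtain ⟨j, hj, rfl⟩ := List.getElem_of_mem hxW
    simp only [List.length_take, List.length_drop] at hj
    have : (r (e.symm ⟨_, hxR⟩) : ℕ) = i + j := by
      simp only [r, Equiv.apply_symm_apply, List.getElem_take, List.getElem_drop]
      exact h.nodup.idxOf_getElem _ _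
    omega
  · have hlt : ∀ (i j : Fin L.length), (i : ℕ) + 1 = j → G.Adj L[(i : ℕ)] L[(j : ℕ)] := by
      rintro i ⟨_, hj⟩ rfl
      exact List.isChain_iff_getElem.1 h.chain i hj
    have htt : ∀ t, G.Adj (τ (e t)) L[(r t : ℕ)] := fun t => by
      rw [hr]
      exact h.adj _ (e t).2
    rintro (i | t) (j | t') hadj <;> rw [rakeGraph, SimpleGraph.fromRel_adj] at hadj
    · rcases hadj.2 with h' | h'
      · exact hlt _ _ h'
      · exact (hlt _ _ h').symm
    · rcases hadj.2 with h' | h'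
      · exact h'.elim
      · have h' : r t' = i := h'
        subst h'
        exact (htt t').symm
    · rcases hadj.2 with h' | h'
      · have h' : r t = j := h'
        subst h'
        exact htt t
      · exact h'.elim
    · rcases hadj.2 with h' | h' <;> exact h'.elim
  · rintro (i | t) (j | t') hij
    · exact congrArg _ (Fin.ext ((h.nodup.getElem_inj_iff).1 hij))
    · have hij : L[(i : ℕ)] = τ (e t') := hij
      exact absurd (hij ▸ List.getElem_mem _) (h.tooth_notMem _ (e t').2)
    · have hij : τ (e t) = L[(j : ℕ)] := hij
      exact absurd (hij ▸ List.getElem_mem _) (h.tooth_notMem _ (e t).2)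
    · have := h.tooth_inj _ (e t).2 _ (e t').2 hij
      exact congrArg _ (e.injective (Subtype.ext this))

theorem IsRake.exists_isMinRake {β : Type*} {G : SimpleGraph β} {L : List β} {R : Finset β}
    {τ : β → β} (h : IsRake G L R τ) :
    ∃ L' R' τ', IsMinRake G L' R' τ' ∧ R'.card = R.card := by
  classical
  have hex : ∃ n, ∃ L' R' τ', IsRake G L' R' τ' ∧ R'.card = R.card ∧ L'.length = n :=
    ⟨_, L, R, τ, h, rfl, rfl⟩
  obtain ⟨L', R', τ', h', hc, hl⟩ := Nat.find_spec hex
  refine ⟨L', R', τ', ⟨h', fun L₁ R₁ τ₁ h₁ hc₁ => ?_⟩, hc⟩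
  rw [hl]
  exact Nat.find_min' hex ⟨L₁, R₁, τ₁, h₁, hc₁.trans hc, rfl⟩

theorem exists_first_split {β : Type*} {p : β → Prop} {L : List β} (h : ∃ x ∈ L, p x) :
    ∃ A x B, L = A ++ x :: B ∧ p x ∧ ∀ a ∈ A, ¬ p a := by
  induction L with
  | nil => simp at h
  | cons y L ih =>
    by_cases hy : p y
    · exact ⟨[], y, L, rfl, hy, by simp⟩
    · obtain ⟨x, hx, hpx⟩ := h
      have hx' : x ∈ L := by
        rcases List.mem_cons.1 hx with rfl | hx
        · exact absurd hpx hy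
        · exact hx
      obtain ⟨A, z, B, rfl, hz, hA⟩ := ih ⟨x, hx', hpx⟩
      exact ⟨y :: A, z, B, rfl, hz, by simpa [hy] using hA⟩

theorem exists_last_split {β : Type*} {p : β → Prop} {L : List β} (h : ∃ x ∈ L, p x) :
    ∃ A x B, L = A ++ x :: B ∧ p x ∧ ∀ b ∈ B, ¬ p b := by
  obtain ⟨A, x, B, hL, hx, hA⟩ := exists_first_split (L := L.reverse) (p := p) (by simpa using h)
  refine ⟨B.reverse, x, A.reverse, ?_, hx, by simpa using hA⟩
  rw [← L.reverse_reverse, hL]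
  simp

/-- A list with an element satisfying `p` can be trimmed at both ends so that it starts and ends with such
elements; this is expressed by the nonempty prefixes and suffixes of `N`. -/
theorem exists_trim {β : Type*} {p : β → Prop} {L : List β} (h : ∃ x ∈ L, p x) :
    ∃ A N B, L = A ++ (N ++ B) ∧ (∀ a ∈ A, ¬ p a) ∧ (∀ b ∈ B, ¬ p b) ∧
      (∀ X Y, N = X ++ Y → X ≠ [] → ∃ x ∈ X, p x) ∧
      ∀ X Y, N = X ++ Y → Y ≠ [] → ∃ y ∈ Y, p y := by
  obtain ⟨A, x, L, rfl, hx, hA⟩ := exists_first_split h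
  obtain ⟨N, z, B, hN, hz, hB⟩ := exists_last_split (L := x :: L) (p := p) ⟨x, by simp, hx⟩
  refine ⟨A, N ++ [z], B, by simp [hN], hA, hB, ?_, ?_⟩
  · intro X Y hXY hX
    obtain ⟨a, X, rfl⟩ := List.exists_cons_of_ne_nil hX
    have : a = x := by
      rw [← List.singleton_append (l := B), ← List.append_assoc, hXY] at hN
      exact (List.cons.inj hN).1.symm
    exact ⟨a, by simp, this ▸ hx⟩
  · intro X Y hXY hY
    rw [← List.dropLast_append_getLast hY, ← List.append_assoc] at hXY
    have := List.append_inj_right' hXY rfl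
    have h2 : z = Y.getLast hY := by simpa using this
    exact ⟨_, List.getLast_mem hY, h2 ▸ hz⟩

theorem containsDenseRake_zero {β : Type*} (G : SimpleGraph β) (l : ℕ) (hl : l ≠ 0) :
    ContainsDenseRake G 0 l := by
  refine ⟨0, Fin.elim0, fun i => i.elim0, fun i hi => by omega, ⟨fun x => ?_, ?_⟩, ?_⟩
  · exact x.elim Fin.elim0 Fin.elim0
  · rintro (i | i) <;> exact i.elim0
  · rintro (i | i) <;> exact i.elim0

/-- Every graph containing a `(k+2)`-rake as a subgraph contains either an
`(s+5)`-dense `k`-rake as a subgraph, or a canonical graph of order at least `s`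
as an induced subgraph. -/
theorem stmt_6 (k s : ℕ) (β : Type) [Fintype β] (G : SimpleGraph β)
    (h : ContainsRake G (k + 2)) :
    ContainsDenseRake G k (s + 5) ∨ ContainsCanonical G s := by
  classical
  obtain ⟨L₀, R₀, τ₀, h₀, hcard₀⟩ := h.exists_isRake
  obtain ⟨L, R, τ, h, hcard⟩ := h₀.exists_isMinRake
  rw [hcard₀] at hcard
  rcases Nat.eq_zero_or_pos k with rfl | hk
  · exact Or.inl (containsDenseRake_zero G _ (by omega))
  obtain ⟨x, hx⟩ : R.Nonempty := Finset.card_pos.1 (by omega)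
  obtain ⟨P, r₁, L₁, hP, hr₁, hPR⟩ :=
    exists_first_split (L := L) (p := (· ∈ R)) ⟨x, h.root_mem x hx, hx⟩
  have hmem₁ : ∀ y ∈ R, y ≠ r₁ → y ∈ L₁ := by
    intro y hy hne
    have h1 := h.root_mem y hy
    have h2 := hPR y
    rw [hP] at h1
    simp only [List.mem_append, List.mem_cons] at h1
    tauto
  have hcard₁ : (R.erase r₁).card = k + 1 := by
    rw [Finset.card_erase_of_mem hr₁, hcard]
    rfl
  obtain ⟨x₁, hx₁⟩ : (R.erase r₁).Nonempty := Finset.card_pos.1 (by omega)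
  rw [Finset.mem_erase] at hx₁
  obtain ⟨Q, r₂, S, hQ, hr₂, hSR⟩ :=
    exists_last_split (L := L₁) (p := (· ∈ R)) ⟨x₁, hmem₁ x₁ hx₁.2 hx₁.1, hx₁.2⟩
  subst hQ
  have hnd := h.nodup
  rw [hP] at hnd
  simp only [List.nodup_append, List.nodup_cons, List.mem_append, List.mem_cons] at hnd
  have hr₂₁ : r₂ ≠ r₁ := by grind
  -- The first and last roots are sacrificed: they guarantee that each of the
  -- remaining ones has base neighbours on both sides.
  set R' := (R.erase r₁).erase r₂ with hR'
  have hcard' : R'.card = k := by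
    rw [hR', Finset.card_erase_of_mem (Finset.mem_erase.2 ⟨hr₂₁, hr₂⟩), hcard₁]
    rfl
  have hR'R : ∀ y ∈ R', y ∈ R := fun y hy => Finset.mem_of_mem_erase (Finset.mem_of_mem_erase hy)
  have hQR' : ∀ y ∈ Q, y ∈ R → y ∈ R' := by
    intro y hy hyR
    simp only [hR', Finset.mem_erase]
    grind
  have hR'Q : ∀ y ∈ R', y ∈ Q := by
    intro y hy
    simp only [hR', Finset.mem_erase] at hy
    have h1 := hmem₁ y hy.2.2 hy.2.1
    have h2 := hSR y
    simp only [List.mem_append, List.mem_cons] at h1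
    tauto
  obtain ⟨x', hx'⟩ : R'.Nonempty := Finset.card_pos.1 (by omega)
  obtain ⟨A, N, B, rfl, hA, hB, hpre, hsuf⟩ :=
    exists_trim (L := Q) (p := (· ∈ R')) ⟨x', hR'Q x' hx', hx'⟩
  have hinf : N <:+: L := ⟨P ++ r₁ :: A, B ++ r₂ :: S, by simp [hP]⟩
  have hN : IsRake G N R' τ :=
    { nodup := h.nodup.sublist hinf.sublist
      chain := h.chain.infix hinf
      root_mem := fun y hy => by
        have h1 := hR'Q y hy
        have h2 := hA y
        have h3 := hB y
        simp only [List.mem_append] at h1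
        tauto
      adj := fun y hy => h.adj y (hR'R y hy)
      tooth_inj := fun y hy y' hy' => h.tooth_inj y (hR'R y hy) y' (hR'R y' hy')
      tooth_notMem := fun y hy hyN => h.tooth_notMem y (hR'R y hy) (hinf.subset hyN) }
  by_cases hd : ∀ X W Y, N = X ++ (W ++ Y) → W.length = s + 5 → ∃ x ∈ W, x ∈ R'
  · exact Or.inl (hN.containsDenseRake hcard' hd)
  right
  push Not at hd
  obtain ⟨X, W, Y, rfl, hWl, hWR⟩ := hd
  have hW : W ≠ [] := by
    rintro rfl
    simp at hWl
  have hX : X ≠ [] := by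
    rintro rfl
    obtain ⟨y, hy, hyR⟩ := hpre W Y rfl hW
    exact hWR y hy hyR
  have hY : Y ≠ [] := by
    rintro rfl
    obtain ⟨y, hy, hyR⟩ := hsuf X (W ++ []) rfl (by simpa using hW)
    exact hWR y (by simpa using hy) hyR
  obtain ⟨X₁, r, X₂, rfl, hr, hX₂⟩ := exists_last_split (p := (· ∈ R')) (hpre X _ rfl hX)
  obtain ⟨Y₁, r', Y₂, rfl, hr', hY₁⟩ := exists_first_split (p := (· ∈ R'))
    (hsuf (X₁ ++ r :: X₂ ++ W) Y (by simp) hY)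
  refine h.containsCanonical_of_gap (A := P ++ r₁ :: (A ++ X₁)) (M := X₂ ++ (W ++ Y₁))
    (C := Y₂ ++ (B ++ r₂ :: S)) (r := r) (r' := r') ?_ (by simp) (by simp) (hR'R r hr)
    (hR'R r' hr') ?_ ?_
  · rw [hP]
    simp
  · intro y hy hyR
    have hyR' : y ∈ R' := by
      refine hQR' y ?_ hyR
      simp only [List.mem_append, List.mem_cons] at hy ⊢
      tauto
    simp only [List.mem_append] at hy
    rcases hy with hy | hy | hy
    · exact hX₂ y hy hyR'
    · exact hWR y hy hyR'
    · exact hY₁ y hy hyR'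
  · simp only [List.length_append]
    omega
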